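/- Let n ≥ 3, α := (n−3)/2, and let d ≥ 1 be an integer; set q_{d,α} := (α²−1)/((d+α)(d+α+1)). Then the function t ↦ (1−t²)^{α}·(p_d^{α,α}(t))² is nonincreasing on the interval [sqrt(1−q_{d,α}), 1]: for all t₁ ≤ t₂ in this interval (intersected with [−1,1]), (1−t₂²)^{α}·(p_d^{α,α}(t₂))² ≤ (1−t₁²)^{α}·(p_d^{α,α}(t₁))². -/

import Mathlib

open MeasureTheory Filter Real

noncomputable section

/-- Generalized binomial coefficient `C(a, k)` for real `a`. -/
def genBinom (a : ℝ) (k : ℕ) : ℝ := (∏ i ∈ Finset.range k, (a - i)) / (Nat.factorial k : ℝ)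

/-- The Jacobi polynomial `p_d^{α,β}`, via the standard explicit formula; it is the degree-`d`
polynomial orthogonal to lower degrees for the weight `(1-t)^α (1+t)^β` on `[-1,1]`,
normalized by `p_d^{α,β}(1) = Γ(d+α+1)/(Γ(α+1)Γ(d+1))`. -/
def jacobiP (α β : ℝ) (d : ℕ) (x : ℝ) : ℝ :=
  ∑ s ∈ Finset.range (d + 1),
    genBinom ((d : ℝ) + α) (d - s) * genBinom ((d : ℝ) + β) s *
      ((x - 1) / 2) ^ s * ((x + 1) / 2) ^ (d - s)

/-- The largest root `t_{1,d}^{α,β}` of the Jacobi polynomial `p_d^{α,β}`. -/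
def maxRoot (α β : ℝ) (d : ℕ) : ℝ := sSup {x : ℝ | jacobiP α β d x = 0}

/-- `q_{d,α} = (α² - 1)/((d+α)(d+α+1))`. -/
def qda (d : ℕ) (α : ℝ) : ℝ := (α ^ 2 - 1) / (((d : ℝ) + α) * ((d : ℝ) + α + 1))

/-!
If `y` solves the Gegenbauer equation `(1 - t²) y'' - 2(α + 1) t y' + μ y = 0`, then
`z = (1 - t²)^(α/2) y` solves the associated Legendre equation
`((1 - t²) z')' = (α² / (1 - t²) - K) z` with `K = μ + α(α + 1)`. Wherever the potential is
nonnegative, the flux `(1 - t²) z z'` has derivative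
`(1 - t²) z'² + (α² / (1 - t²) - K) z² ≥ 0`; its boundary value at `t = 1` is `≤ 0`, so
`z z' ≤ 0` and `z² = (1 - t²)^α y²` decreases. For `y = p_d^{α,α}` one has `μ = d (d + 2α + 1)`
and `K = (d + α)(d + α + 1)`.
-/

section JacobiEquation

open Polynomial

/-- The coefficient of `((x - 1) / 2) ^ s * ((x + 1) / 2) ^ (d - s)` in `jacobiP α β d x`;
meaningful only for `s ≤ d`. -/
def jacobiCoeff (α β : ℝ) (d s : ℕ) : ℝ :=
  genBinom ((d : ℝ) + α) (d - s) * genBinom ((d : ℝ) + β) s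

lemma genBinom_succ_mul (a : ℝ) (k : ℕ) :
    genBinom a (k + 1) * (k + 1) = genBinom a k * (a - k) := by
  unfold genBinom
  rw [Finset.prod_range_succ, Nat.factorial_succ]
  push_cast
  field_simp

lemma jacobiCoeff_succ_mul (α β : ℝ) {d s : ℕ} (hs : s < d) :
    jacobiCoeff α β d (s + 1) * ((s + 1) * (s + 1 + α)) =
      jacobiCoeff α β d s * ((d - s : ℕ) * ((d - s : ℕ) + β)) := by
  obtain ⟨j, rfl⟩ := Nat.exists_eq_add_of_lt hs
  have hleft := genBinom_succ_mul (((s + j + 1 : ℕ) : ℝ) + α) j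
  have hright := genBinom_succ_mul (((s + j + 1 : ℕ) : ℝ) + β) s
  unfold jacobiCoeff
  rw [show s + j + 1 - (s + 1) = j by lia, show s + j + 1 - s = j + 1 by lia]
  push_cast at hleft hright ⊢
  linear_combination (genBinom (s + j + 1 + α) j * (s + 1 + α)) * hright -
    (genBinom (s + j + 1 + β) s * (j + 1 + β)) * hleft

/-- The basis polynomial `((X - 1) / 2) ^ s * ((X + 1) / 2) ^ m`, in terms of which the Jacobi
polynomials of degree `s + m` are written. -/
def jacobiBasis (s m : ℕ) : ℝ[X] :=
  (C (1 / 2) * (X - 1)) ^ s * (C (1 / 2) * (X + 1)) ^ m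

/-- The Jacobi polynomial `p_d^{α,β}` as a formal polynomial. -/
def jacobiPoly (α β : ℝ) (d : ℕ) : ℝ[X] :=
  ∑ s ∈ Finset.range (d + 1), jacobiCoeff α β d s • jacobiBasis s (d - s)

lemma eval_jacobiPoly (α β : ℝ) (d : ℕ) (x : ℝ) :
    (jacobiPoly α β d).eval x = jacobiP α β d x := by
  simp only [jacobiPoly, jacobiP, jacobiBasis, eval_finsetSum]
  refine Finset.sum_congr rfl fun s _ => ?_
  simp only [jacobiCoeff, eval_smul, eval_mul, eval_pow, eval_C, eval_sub, eval_add, eval_X,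
    eval_one, smul_eq_mul]
  ring

/-- The Jacobi differential operator `y ↦ (1 - X²) y'' + (β - α - (α + β + 2) X) y'`. -/
def jacobiOperator (α β : ℝ) : ℝ[X] →ₗ[ℝ] ℝ[X] :=
  LinearMap.mulLeft ℝ (1 - X ^ 2) ∘ₗ derivative ∘ₗ derivative +
    LinearMap.mulLeft ℝ (C (β - α) - C (α + β + 2) * X) ∘ₗ derivative

lemma eval_jacobiOperator (α β : ℝ) (p : ℝ[X]) (x : ℝ) :
    (jacobiOperator α β p).eval x = (1 - x ^ 2) * (derivative (derivative p)).eval x +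
      (β - α - (α + β + 2) * x) * (derivative p).eval x := by
  simp [jacobiOperator]

-- Only degree `s + m - 1` survives because `(X + 1) / 2 - (X - 1) / 2 = 1`; this is what makes the
-- sum over `s` telescope. At `s = 0` or `m = 0` the truncated exponent has coefficient `0`.
lemma jacobiOperator_jacobiBasis (α β : ℝ) (s m : ℕ) :
    jacobiOperator α β (jacobiBasis s m) + ((s + m) * (s + m + α + β + 1) : ℝ) • jacobiBasis s m =
      ((m * (m + β)) : ℝ) • jacobiBasis s (m - 1) -
        ((s * (s + α)) : ℝ) • jacobiBasis (s - 1) m := by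
  refine Polynomial.funext fun x => ?_
  rw [eval_add, eval_jacobiOperator]
  rcases s with _ | _ | s <;> rcases m with _ | _ | m <;>
    simp [jacobiBasis, derivative_pow] <;> ring

theorem jacobiOperator_jacobiPoly (α β : ℝ) (d : ℕ) :
    jacobiOperator α β (jacobiPoly α β d) = -((d * (d + α + β + 1) : ℝ) • jacobiPoly α β d) := by
  rw [← add_eq_zero_iff_eq_neg]
  have hterm : ∀ s ∈ Finset.range (d + 1),
      jacobiCoeff α β d s • (jacobiOperator α β (jacobiBasis s (d - s)) +
          (d * (d + α + β + 1) : ℝ) • jacobiBasis s (d - s)) =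
        (jacobiCoeff α β d s * ((d - s : ℕ) * ((d - s : ℕ) + β))) • jacobiBasis s (d - s - 1) -
          (jacobiCoeff α β d s * (s * (s + α))) • jacobiBasis (s - 1) (d - s) := by
    intro s hs
    have hd : (d : ℝ) = s + (d - s : ℕ) := by
      exact_mod_cast (Nat.add_sub_cancel' (Finset.mem_range_succ_iff.1 hs)).symm
    rw [mul_smul (jacobiCoeff α β d s), mul_smul (jacobiCoeff α β d s), ← smul_sub,
      ← jacobiOperator_jacobiBasis, ← hd]
  calc jacobiOperator α β (jacobiPoly α β d) + (d * (d + α + β + 1) : ℝ) • jacobiPoly α β d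
      = ∑ s ∈ Finset.range (d + 1),
          jacobiCoeff α β d s • (jacobiOperator α β (jacobiBasis s (d - s)) +
            (d * (d + α + β + 1) : ℝ) • jacobiBasis s (d - s)) := by
        simp only [jacobiPoly, map_sum, map_smul, Finset.smul_sum, smul_add, Finset.sum_add_distrib,
          smul_comm (d * (d + α + β + 1) : ℝ)]
    _ = ∑ s ∈ Finset.range d,
          ((jacobiCoeff α β d s * ((d - s : ℕ) * ((d - s : ℕ) + β))) • jacobiBasis s (d - s - 1) -
            (jacobiCoeff α β d (s + 1) * ((s + 1) * (s + 1 + α))) •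
              jacobiBasis s (d - (s + 1))) := by
        rw [Finset.sum_congr rfl hterm, Finset.sum_sub_distrib, Finset.sum_range_succ,
          Finset.sum_range_succ' _ d]
        simp [Finset.sum_sub_distrib]
    _ = 0 := Finset.sum_eq_zero fun s hs => by
        rw [jacobiCoeff_succ_mul α β (Finset.mem_range.1 hs), Nat.sub_sub, sub_self]

lemma jacobiPoly_self_gegenbauer_equation (α : ℝ) (d : ℕ) (t : ℝ) :
    (1 - t ^ 2) * (jacobiPoly α α d).derivative.derivative.eval t -
      2 * (α + 1) * t * (jacobiPoly α α d).derivative.eval t +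
      d * (d + 2 * α + 1) * (jacobiPoly α α d).eval t = 0 := by
  have h := congr_arg (eval t) (jacobiOperator_jacobiPoly α α d)
  rw [eval_jacobiOperator, eval_neg, eval_smul, smul_eq_mul] at h
  linear_combination h

end JacobiEquation

section SturmLiouville

open Set

theorem antitoneOn_sq_of_sturmLiouville {p q z w : ℝ → ℝ} {a b : ℝ}
    (hp : ∀ t ∈ Ioo a b, 0 < p t) (hq : ∀ t ∈ Ioo a b, 0 ≤ q t)
    (hzc : ContinuousOn z (Icc a b)) (hwc : ContinuousOn w (Icc a b))
    (hz : ∀ t ∈ Ioo a b, HasDerivAt z (w t / p t) t)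
    (hw : ∀ t ∈ Ioo a b, HasDerivAt w (q t * z t) t) (hb : z b * w b ≤ 0) :
    AntitoneOn (fun t => z t ^ 2) (Icc a b) := by
  have hflux : MonotoneOn (fun t => z t * w t) (Icc a b) := by
    refine monotoneOn_of_hasDerivWithinAt_nonneg (convex_Icc a b) (hzc.mul hwc)
      (f' := fun t => w t / p t * w t + z t * (q t * z t)) ?_ ?_ <;> rw [interior_Icc]
    · exact fun t ht => ((hz t ht).mul (hw t ht)).hasDerivWithinAt
    · intro t ht
      have hpt := hp t ht
      have hqt := hq t ht
      calc (0 : ℝ) ≤ w t ^ 2 / p t + q t * z t ^ 2 := by positivity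
        _ = w t / p t * w t + z t * (q t * z t) := by ring
  refine antitoneOn_of_hasDerivWithinAt_nonpos (convex_Icc a b) (hzc.pow 2)
    (f' := fun t => 2 * (z t * w t) / p t) ?_ ?_ <;> rw [interior_Icc]
  · refine fun t ht => (((hz t ht).pow 2).congr_deriv ?_).hasDerivWithinAt
    push_cast
    ring
  · intro t ht
    have hab : a ≤ b := (ht.1.trans ht.2).le
    have hle : z t * w t ≤ z b * w b :=
      hflux (Ioo_subset_Icc_self ht) (right_mem_Icc.2 hab) ht.2.le
    exact div_nonpos_of_nonpos_of_nonneg (by linarith) (hp t ht).le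

end SturmLiouville

section GegenbauerEquation

open Set

lemma hasDerivAt_one_sub_sq (t : ℝ) : HasDerivAt (fun t : ℝ => 1 - t ^ 2) (-(2 * t)) t := by
  simpa using (hasDerivAt_pow 2 t).const_sub 1

lemma hasDerivAt_one_sub_sq_rpow_mul {f : ℝ → ℝ} {f' t : ℝ} (γ : ℝ) (ht : 0 < 1 - t ^ 2)
    (hf : HasDerivAt f f' t) :
    HasDerivAt (fun t => (1 - t ^ 2) ^ γ * f t)
      ((1 - t ^ 2) ^ γ * ((1 - t ^ 2) * f' - 2 * γ * t * f t) / (1 - t ^ 2)) t := by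
  refine (((hasDerivAt_one_sub_sq t).rpow_const (Or.inl ht.ne')).mul hf).congr_deriv ?_
  rw [Real.rpow_sub_one ht.ne']
  field_simp
  ring

/-- The flux `(1 - t²) z'` of `z = (1 - t²)^(α/2) y`, written in terms of `y` and `y'` so that it
makes sense also at `t = ±1`. -/
def legendreFlux (α : ℝ) (y y' : ℝ → ℝ) (t : ℝ) : ℝ :=
  (1 - t ^ 2) ^ (α / 2) * ((1 - t ^ 2) * y' t - α * t * y t)

lemma hasDerivAt_legendreFlux {α μ t y'' : ℝ} {y y' : ℝ → ℝ} (ht : 0 < 1 - t ^ 2)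
    (hy : HasDerivAt y (y' t) t) (hy' : HasDerivAt y' y'' t)
    (hode : (1 - t ^ 2) * y'' - 2 * (α + 1) * t * y' t + μ * y t = 0) :
    HasDerivAt (legendreFlux α y y')
      ((α ^ 2 / (1 - t ^ 2) - (μ + α * (α + 1))) * ((1 - t ^ 2) ^ (α / 2) * y t)) t := by
  have hfactor : HasDerivAt (fun t => (1 - t ^ 2) * y' t - α * t * y t)
      (-(2 * t) * y' t + (1 - t ^ 2) * y'' - (α * 1 * y t + α * t * y' t)) t :=
    ((hasDerivAt_one_sub_sq t).mul hy').sub (((hasDerivAt_id t).const_mul α).mul hy)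
  refine (hasDerivAt_one_sub_sq_rpow_mul _ ht hfactor).congr_deriv ?_
  field_simp
  linear_combination (1 - t ^ 2) * hode

lemma le_div_one_sub_sq {A K r t : ℝ} (hA : 0 ≤ A) (hr : 0 ≤ r) (hK : K * (1 - r ^ 2) ≤ A)
    (hrt : r ≤ t) (ht : 0 < 1 - t ^ 2) : K ≤ A / (1 - t ^ 2) := by
  rw [le_div_iff₀ ht]
  rcases le_total 0 K with hK0 | hK0
  · exact (mul_le_mul_of_nonneg_left (by gcongr) hK0).trans hK
  · exact (mul_nonpos_of_nonpos_of_nonneg hK0 ht.le).trans hA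

theorem antitoneOn_one_sub_sq_rpow_mul_sq_of_gegenbauer {α μ r : ℝ} {y y' y'' : ℝ → ℝ}
    (hα : 0 ≤ α) (hr : 0 ≤ r) (hμ : (μ + α * (α + 1)) * (1 - r ^ 2) ≤ α ^ 2)
    (hyc : ContinuousOn y (Icc r 1)) (hyc' : ContinuousOn y' (Icc r 1))
    (hy : ∀ t ∈ Ioo r 1, HasDerivAt y (y' t) t) (hy' : ∀ t ∈ Ioo r 1, HasDerivAt y' (y'' t) t)
    (hode : ∀ t ∈ Ioo r 1, (1 - t ^ 2) * y'' t - 2 * (α + 1) * t * y' t + μ * y t = 0) :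
    AntitoneOn (fun t => (1 - t ^ 2) ^ α * y t ^ 2) (Icc r 1) := by
  have hpos : ∀ t ∈ Ioo r 1, 0 < 1 - t ^ 2 := fun t ht => by nlinarith [ht.1, ht.2]
  have hweight : ContinuousOn (fun t : ℝ => (1 - t ^ 2) ^ (α / 2)) (Icc r 1) :=
    ContinuousOn.rpow_const (by fun_prop) fun _ _ => Or.inr (by linarith)
  have hboundary : (1 - 1 ^ 2) ^ (α / 2) * y 1 * legendreFlux α y y' 1 ≤ 0 := by
    calc (1 - 1 ^ 2) ^ (α / 2) * y 1 * legendreFlux α y y' 1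
        = -(α * ((1 - 1 ^ 2) ^ (α / 2) * y 1) ^ 2) := by unfold legendreFlux; ring
      _ ≤ 0 := neg_nonpos.2 (by positivity)
  have hanti : AntitoneOn (fun t => ((1 - t ^ 2) ^ (α / 2) * y t) ^ 2) (Icc r 1) := by
    refine antitoneOn_sq_of_sturmLiouville (w := legendreFlux α y y') hpos
      (fun t ht => sub_nonneg.2 (le_div_one_sub_sq (sq_nonneg α) hr hμ ht.1.le (hpos t ht)))
      (hweight.mul hyc) (hweight.mul (by fun_prop)) (fun t ht => ?_)
      (fun t ht => hasDerivAt_legendreFlux (hpos t ht) (hy t ht) (hy' t ht) (hode t ht)) hboundary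
    refine (hasDerivAt_one_sub_sq_rpow_mul _ (hpos t ht) (hy t ht)).congr_deriv ?_
    unfold legendreFlux
    ring
  refine hanti.congr fun t ht => ?_
  have hnonneg : 0 ≤ 1 - t ^ 2 := by nlinarith [ht.1, ht.2]
  beta_reduce
  rw [mul_pow, ← Real.rpow_mul_natCast hnonneg, Nat.cast_ofNat, div_mul_cancel₀ α two_ne_zero]

end GegenbauerEquation

theorem jacobi_weighted_square_antitone_general {α r : ℝ} (hα : 0 ≤ α) (hr : 0 ≤ r) (d : ℕ)
    (hdr : ((d : ℝ) + α) * (d + α + 1) * (1 - r ^ 2) ≤ α ^ 2) :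
    AntitoneOn (fun t => (1 - t ^ 2) ^ α * jacobiP α α d t ^ 2) (Set.Icc r 1) := by
  simp only [← eval_jacobiPoly]
  exact antitoneOn_one_sub_sq_rpow_mul_sq_of_gegenbauer hα hr (le_of_eq_of_le (by ring) hdr)
    (Polynomial.continuousOn _) (Polynomial.continuousOn _)
    (fun t _ => Polynomial.hasDerivAt _ t) (fun t _ => Polynomial.hasDerivAt _ t)
    fun t _ => jacobiPoly_self_gegenbauer_equation α d t

lemma mul_one_sub_sqrt_one_sub_qda_sq_le {d : ℕ} {α : ℝ} (hd : 1 ≤ d) (hα : 0 ≤ α) :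
    ((d : ℝ) + α) * (d + α + 1) * (1 - √(1 - qda d α) ^ 2) ≤ α ^ 2 := by
  calc ((d : ℝ) + α) * (d + α + 1) * (1 - √(1 - qda d α) ^ 2)
      ≤ ((d : ℝ) + α) * (d + α + 1) * qda d α := by
        have hsqrt : 1 - qda d α ≤ √(1 - qda d α) ^ 2 := (Real.sqrt_le_iff.1 le_rfl).2
        gcongr
        linarith
    _ = α ^ 2 - 1 := mul_div_cancel₀ _ (by positivity)
    _ ≤ α ^ 2 := by linarith

/-- With `α = (n-3)/2`, the function `(1-t²)^α·(p_d^{α,α}(t))²` is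
nonincreasing on `[sqrt(1 - q_{d,α}), 1]`. -/
theorem jacobi_weighted_square_antitone (n : ℕ) (hn : 3 ≤ n) (d : ℕ) (hd : 1 ≤ d) :
    AntitoneOn
      (fun t => (1 - t ^ 2) ^ (((n : ℝ) - 3) / 2) *
        jacobiP (((n : ℝ) - 3) / 2) (((n : ℝ) - 3) / 2) d t ^ 2)
      (Set.Icc (Real.sqrt (1 - qda d (((n : ℝ) - 3) / 2))) 1) := by
  have hα : 0 ≤ ((n : ℝ) - 3) / 2 :=
    div_nonneg (sub_nonneg.2 (by exact_mod_cast hn)) zero_le_two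
  exact jacobi_weighted_square_antitone_general hα (Real.sqrt_nonneg _) d
    (mul_one_sub_sqrt_one_sub_qda_sq_le hd hα)
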